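/- arXiv:2405.12771 — 6 statements merged into one kernel-verified Lean document; each statement's English description precedes it below -/
import Mathlib

section
/- Let k and l be fields. If Th_{∀₁∃}(k) ⊆ Th_{∀₁∃}(l), then Th_{∀₁∃}(k(t)) ⊆ Th_{∀₁∃}(l(t)); that is, if every ring sentence of the form ∀x ∃y₁…∃yₛ ψ (ψ quantifier-free) true in k is true in l, then every such sentence true in the rational function field k(t) is true in l(t). -/
open FirstOrder Language

attribute [local instance] FirstOrder.Ring.compatibleRingOfRing

/-- Apply existential quantifiers to the last `s` bound variables of a bounded formula. -/
def FirstOrder.Language.BoundedFormula.exsN {L : FirstOrder.Language} {α : Type*} {m : ℕ} :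
    ∀ {s : ℕ}, L.BoundedFormula α (m + s) → L.BoundedFormula α m
  | 0, φ => φ
  | _ + 1, φ => φ.ex.exsN



open Polynomial in
lemma aux_ratHom {k A : Type*} [Field k] [Field A] (g : k →+* A) (t : A)
    (inj : ∀ p : k[X], p.eval₂ g t = 0 → p = 0) :
    ∃ f : RatFunc k →+* A, (∀ a, f (RatFunc.C a) = g a) ∧ f RatFunc.X = t := by
  have hi : Function.Injective (Polynomial.eval₂RingHom g t) := by
    rw [injective_iff_map_eq_zero]
    intro p hp
    exact inj p hp
  refine ⟨RatFunc.liftRingHom (Polynomial.eval₂RingHom g t)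
    (nonZeroDivisors_le_comap_nonZeroDivisors_of_injective _ hi), ?_, ?_⟩
  · intro a
    rw [← RatFunc.algebraMap_C, RatFunc.liftRingHom_algebraMap]; simp
  · rw [← RatFunc.algebraMap_X, RatFunc.liftRingHom_algebraMap]; simp

lemma aux_exsN {L : FirstOrder.Language} {α M : Type*} [L.Structure M] {m : ℕ} (v : α → M)
    (xs : Fin m → M) : ∀ {s : ℕ} (φ : L.BoundedFormula α (m + s)),
    φ.exsN.Realize v xs ↔ ∃ ys : Fin s → M, φ.Realize v (Fin.append xs ys)
  | 0, φ => by
    constructor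
    · intro h
      refine ⟨Fin.elim0, ?_⟩
      rw [Fin.append_elim0]
      exact h
    · rintro ⟨ys, h⟩
      rw [Subsingleton.elim ys Fin.elim0, Fin.append_elim0] at h
      exact h
  | s + 1, φ => by
    have := aux_exsN v xs (s := s) (BoundedFormula.ex (n := m + s) φ)
    refine Iff.trans this ?_
    simp only [BoundedFormula.realize_ex]
    constructor
    · rintro ⟨ys, a, h⟩
      refine ⟨Fin.snoc ys a, ?_⟩
      rw [Fin.append_snoc]
      exact h
    · rintro ⟨ys, h⟩
      refine ⟨Fin.init ys, ys (Fin.last s), ?_⟩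
      rw [← Fin.append_snoc, Fin.snoc_init_self]
      exact h

lemma aux_sem {K : Type*} [Field K] {s : ℕ} (ψ : Language.ring.BoundedFormula Empty (1 + s)) :
    K ⊨ (ψ.exsN.alls : Language.ring.Sentence) ↔
      ∀ a : K, ∃ ys : Fin s → K, ψ.Realize default (Fin.append (fun _ => a) ys) := by
  have : K ⊨ (ψ.exsN.alls : Language.ring.Sentence) ↔
    ∀ xs : Fin 1 → K, ψ.exsN.Realize default xs := BoundedFormula.realize_alls
  refine this.trans ?_
  simp only [aux_exsN]
  constructor
  · intro h a
    exact h _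
  · intro h xs
    have : xs = fun _ => xs 0 := by
      ext i; rw [Subsingleton.elim i 0]
    rw [this]
    exact h _

lemma aux_term {ι F K : Type*} [Field F] [Field K] (U : Ultrafilter ι)
    (f : F →+* Filter.Germ (U : Filter ι) K) {β : Type*} (z : β → F) (w : β → ι → K)
    (hw : ∀ j, f (z j) = ((w j : ι → K) : Filter.Germ (U : Filter ι) K))
    (t : Language.ring.Term β) :
    f (t.realize z) = ((fun i => t.realize (fun j => w j i) : ι → K) :
      Filter.Germ (U : Filter ι) K) := by
  induction t with
  | var j => simpa using hw j
  | func g ts ih =>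
    cases g
    · simp only [Term.realize]
      erw [Ring.CompatibleRing.funMap_add, map_add, ih, ih]
      rfl
    · simp only [Term.realize]
      erw [Ring.CompatibleRing.funMap_mul, map_mul, ih, ih]
      rfl
    · simp only [Term.realize]
      erw [Ring.CompatibleRing.funMap_neg, map_neg, ih]
      rfl
    · simp only [Term.realize]
      erw [Ring.CompatibleRing.funMap_zero, map_zero]
      rfl
    · simp only [Term.realize]
      erw [Ring.CompatibleRing.funMap_one, map_one]
      rfl

lemma aux_qf {ι F K : Type*} [Field F] [Field K] (U : Ultrafilter ι)
    (f : F →+* Filter.Germ (U : Filter ι) K) {n : ℕ} (z : Fin n → F) (w : Fin n → ι → K)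
    (hw : ∀ j, f (z j) = ((w j : ι → K) : Filter.Germ (U : Filter ι) K))
    (ψ : Language.ring.BoundedFormula Empty n) (hψ : ψ.IsQF) :
    ψ.Realize default z ↔ ∀ᶠ i in (U : Filter ι), ψ.Realize default (fun j => w j i) := by
  induction hψ with
  | falsum => simpa [BoundedFormula.Realize] using U.neBot.ne
  | of_isAtomic h =>
    cases h with
    | equal t₁ t₂ =>
      have key : ∀ t : Language.ring.Term (Empty ⊕ Fin n),
          f (t.realize (Sum.elim default z)) =
          ((fun i => t.realize (Sum.elim default (fun j => w j i)) : ι → K) :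
            Filter.Germ (U : Filter ι) K) := by
        intro t
        rw [aux_term U f (Sum.elim default z) (Sum.elim (fun e => e.elim) w)
          (by rintro (e | j); exacts [e.elim, hw j])]
        congr 1
        ext i
        congr 1
        ext (e | j)
        · exact e.elim
        · rfl
      simp only [BoundedFormula.realize_bdEqual]
      rw [← f.injective.eq_iff, key, key, Filter.Germ.coe_eq]
      rfl
    | rel R ts => exact R.elim
  | imp h₁ h₂ ih₁ ih₂ =>
    simp only [BoundedFormula.realize_imp]
    rw [ih₁, ih₂, Ultrafilter.eventually_imp]

lemma aux_transfer {ι F K : Type*} [Field F] [Field K] (U : Ultrafilter ι)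
    (f : F →+* Filter.Germ (U : Filter ι) K) {s : ℕ}
    (ψ : Language.ring.BoundedFormula Empty (1 + s)) (hψ : ψ.IsQF) (c : F) (a : K)
    (hc : f c = ((fun _ => a : ι → K) : Filter.Germ (U : Filter ι) K))
    (h : ∃ ys : Fin s → F, ψ.Realize default (Fin.append (fun _ => c) ys)) :
    ∃ ys : Fin s → K, ψ.Realize default (Fin.append (fun _ => a) ys) := by
  obtain ⟨ys, h⟩ := h
  have : ∀ j, ∃ w : ι → K, (w : Filter.Germ (U : Filter ι) K) = f (ys j) :=
    fun j => Quotient.exists_rep (f (ys j))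
  choose w hw using this
  rw [aux_qf U f _ (Fin.append (fun _ _ => a) w) ?_ ψ hψ] at h
  · obtain ⟨i, hi⟩ := h.exists
    refine ⟨fun j => w j i, ?_⟩
    convert hi using 1
    ext j
    refine Fin.addCases (fun j => ?_) (fun j => ?_) j <;> simp
  · intro j
    refine Fin.addCases (fun j => ?_) (fun j => ?_) j
    · simpa using hc
    · simpa using (hw j).symm

lemma aux_transfer_hom {F K : Type*} [Field F] [Field K] (f : F →+* K) {s : ℕ}
    (ψ : Language.ring.BoundedFormula Empty (1 + s)) (hψ : ψ.IsQF) (c : F)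
    (h : ∃ ys : Fin s → F, ψ.Realize default (Fin.append (fun _ => c) ys)) :
    ∃ ys : Fin s → K, ψ.Realize default (Fin.append (fun _ => f c) ys) :=
  aux_transfer (pure () : Ultrafilter Unit)
    ((Filter.Germ.coeRingHom _).comp ((Pi.constRingHom Unit K).comp f)) ψ hψ c (f c) rfl h

lemma aux_foldr {L : FirstOrder.Language} {α : Type*} {n : ℕ} (l : List (L.BoundedFormula α n))
    (h : ∀ φ ∈ l, φ.IsQF) : (l.foldr (· ⊓ ·) ⊤).IsQF := by
  induction l with
  | nil => exact BoundedFormula.IsQF.top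
  | cons φ l ih =>
    exact (h φ (by simp)).inf (ih fun φ hφ => h φ (by simp [hφ]))

lemma aux_eqs {k l : Type} [Field k] [Field l]
    (h : ∀ (s : ℕ) (ψ : Language.ring.BoundedFormula Empty (1 + s)), ψ.IsQF →
      k ⊨ (ψ.exsN.alls : Language.ring.Sentence) → l ⊨ (ψ.exsN.alls : Language.ring.Sentence))
    (s : ℕ) (W : Set (FreeCommRing (Fin (1 + s)))) (hW : W.Finite)
    (hk : ∀ a : k, ∃ ys : Fin s → k, ∀ p ∈ W,
      FreeCommRing.lift (Fin.append (fun _ => a) ys) p = 0) :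
    ∀ a : l, ∃ ys : Fin s → l, ∀ p ∈ W,
      FreeCommRing.lift (Fin.append (fun _ => a) ys) p = 0 := by
  let T : FreeCommRing (Fin (1 + s)) → Language.ring.BoundedFormula Empty (1 + s) := fun p =>
    ((Ring.termOfFreeCommRing p).relabel Sum.inr).bdEqual
      ((Ring.termOfFreeCommRing 0).relabel Sum.inr)
  have hT : ∀ (K : Type) [Field K] (v : Fin (1 + s) → K) p, (T p).Realize default v ↔
      FreeCommRing.lift v p = 0 := by
    intro K _ v p
    simp only [T, BoundedFormula.realize_bdEqual, Term.realize_relabel,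
      Ring.realize_termOfFreeCommRing]
    simp
  have key : ∀ (K : Type) [Field K] (v : Fin (1 + s) → K),
      ((hW.toFinset.toList.map T).foldr (· ⊓ ·) ⊤).Realize default v ↔
      ∀ p ∈ W, FreeCommRing.lift v p = 0 := by
    intro K _ v
    rw [BoundedFormula.realize_foldr_inf]
    simp [hT]
  have := h s ((hW.toFinset.toList.map T).foldr (· ⊓ ·) ⊤) (aux_foldr _ (by
    intro φ hφ
    obtain ⟨p, -, rfl⟩ := List.mem_map.1 hφ
    exact (BoundedFormula.IsAtomic.equal _ _).isQF))
  rw [aux_sem, aux_sem] at this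
  simp only [key] at this
  exact this hk

lemma aux_partial {k l : Type} [Field k] [Field l]
    (h : ∀ (s : ℕ) (ψ : Language.ring.BoundedFormula Empty (1 + s)), ψ.IsQF →
      k ⊨ (ψ.exsN.alls : Language.ring.Sentence) → l ⊨ (ψ.exsN.alls : Language.ring.Sentence))
    (S : Finset k) : ∃ g : k → l, (1 ∈ S → g 1 = 1) ∧
      (∀ a ∈ S, ∀ b ∈ S, a + b ∈ S → g (a + b) = g a + g b) ∧
      (∀ a ∈ S, ∀ b ∈ S, a * b ∈ S → g (a * b) = g a * g b) := by
  classical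
  let e := S.equivFin
  let y0 : Fin S.card → k := fun i => (e.symm i : k)
  let x : Fin S.card → FreeCommRing (Fin (1 + S.card)) := fun i => .of (Fin.natAdd 1 i)
  let V : Set (FreeCommRing (Fin (1 + S.card))) :=
    (Set.range fun i => x i - 1) ∪
    (Set.range fun i : Fin S.card × Fin S.card × Fin S.card => x i.1 - (x i.2.1 + x i.2.2)) ∪
    (Set.range fun i : Fin S.card × Fin S.card × Fin S.card => x i.1 - (x i.2.1 * x i.2.2))
  have hV : V.Finite := ((Set.finite_range _).union (Set.finite_range _)).union (Set.finite_range _)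
  let W := {p ∈ V | ∀ a : k, FreeCommRing.lift (Fin.append (fun _ => a) y0) p = 0}
  obtain ⟨y, hy⟩ := aux_eqs h S.card W (hV.subset fun p hp => hp.1)
    (fun a => ⟨y0, fun p hp => hp.2 a⟩) 0
  refine ⟨fun a => if ha : a ∈ S then y (e ⟨a, ha⟩) else 0, ?_, ?_, ?_⟩
  · intro h1
    have := hy (x (e ⟨1, h1⟩) - 1) ⟨Or.inl (Or.inl ⟨_, rfl⟩), by intro a; simp [x, y0]⟩
    simp only [x, map_sub, FreeCommRing.lift_of, Fin.append_right, map_one] at this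
    simpa [h1, sub_eq_zero] using this
  · intro a ha b hb hab
    have := hy (x (e ⟨_, hab⟩) - (x (e ⟨a, ha⟩) + x (e ⟨b, hb⟩)))
      ⟨Or.inl (Or.inr ⟨(_, _, _), rfl⟩), by intro a; simp [x, y0]⟩
    simp only [x, map_sub, map_add, FreeCommRing.lift_of, Fin.append_right] at this
    simpa [ha, hb, hab, sub_eq_zero] using this
  · intro a ha b hb hab
    have := hy (x (e ⟨_, hab⟩) - (x (e ⟨a, ha⟩) * x (e ⟨b, hb⟩)))
      ⟨Or.inr ⟨(_, _, _), rfl⟩, by intro a; simp [x, y0]⟩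
    simp only [x, map_sub, map_mul, FreeCommRing.lift_of, Fin.append_right] at this
    simpa [ha, hb, hab, sub_eq_zero] using this

/-- case k finite -/
lemma aux_finite {k l : Type} [Field k] [Field l] [Finite k]
    (h : ∀ (s : ℕ) (ψ : Language.ring.BoundedFormula Empty (1 + s)), ψ.IsQF →
      k ⊨ (ψ.exsN.alls : Language.ring.Sentence) → l ⊨ (ψ.exsN.alls : Language.ring.Sentence)) :
    ∃ g : k →+* l, Function.Surjective g := by
  classical
  have := Fintype.ofFinite k
  obtain ⟨g, h1, h2, h3⟩ := aux_partial h (Finset.univ : Finset k)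
  simp only [Finset.mem_univ, true_implies] at h1 h2 h3
  let G : k →+* l := RingHom.mk' ⟨⟨g, h1⟩, fun a b => h3 a b⟩ (fun a b => h2 a b)
  have hpow := aux_eqs h 0 {(.of 0) ^ (Fintype.card k) - .of 0} (Set.finite_singleton _) (by
    intro a
    refine ⟨Fin.elim0, ?_⟩
    rintro p rfl
    have h0 : Fin.append (fun _ : Fin 1 => a) Fin.elim0 0 = a := rfl
    simp only [map_sub, map_pow, FreeCommRing.lift_of, h0, FiniteField.pow_card, sub_self])
  have hpow' : ∀ a : l, a ^ (Fintype.card k) = a := by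
    intro a
    obtain ⟨y, hy⟩ := hpow a
    have := hy _ rfl
    have h0 : Fin.append (fun _ : Fin 1 => a) y 0 = a := rfl
    simpa only [map_sub, map_pow, FreeCommRing.lift_of, h0, sub_eq_zero] using this
  have hq := Fintype.one_lt_card (α := k)
  have hne := FiniteField.X_pow_card_sub_X_ne_zero l hq
  have hdeg := FiniteField.X_pow_card_sub_X_natDegree_eq l hq
  refine ⟨G, ?_⟩
  intro b
  by_contra hb
  have hinj : Function.Injective G := G.injective
  have hsub : insert b (Finset.univ.image G) ⊆
      (Polynomial.X ^ (Fintype.card k) - Polynomial.X : Polynomial l).roots.toFinset := by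
    intro c _
    rw [Multiset.mem_toFinset, Polynomial.mem_roots hne]
    simp [hpow' c]
  have c1 := Finset.card_le_card hsub
  rw [Finset.card_insert_of_notMem (by
    simp only [Finset.mem_image, Finset.mem_univ, true_and]; exact hb),
    Finset.card_image_of_injective _ hinj, Finset.card_univ] at c1
  have c2 := Multiset.toFinset_card_le
    (Polynomial.X ^ (Fintype.card k) - Polynomial.X : Polynomial l).roots
  have c3 := Polynomial.card_roots' (Polynomial.X ^ (Fintype.card k) - Polynomial.X : Polynomial l)
  omega

lemma aux_emb {k l : Type} [Field k] [Field l]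
    (h : ∀ (s : ℕ) (ψ : Language.ring.BoundedFormula Empty (1 + s)), ψ.IsQF →
      k ⊨ (ψ.exsN.alls : Language.ring.Sentence) → l ⊨ (ψ.exsN.alls : Language.ring.Sentence)) :
    ∃ (ι : Type) (U : Ultrafilter ι) (g : k → ι → l) (f : k →+* Filter.Germ (U : Filter ι) l),
      ∀ a, f a = ((g a : ι → l) : Filter.Germ (U : Filter ι) l) := by
  classical
  choose g h1 h2 h3 using aux_partial h
  let U : Ultrafilter (Finset k) := Ultrafilter.of Filter.atTop
  have hU : (U : Filter (Finset k)) ≤ Filter.atTop := Ultrafilter.of_le _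
  have hev : ∀ T : Finset k, ∀ᶠ S in (U : Filter (Finset k)), T ⊆ S := fun T =>
    hU (Filter.eventually_ge_atTop T)
  let f : k →+* Filter.Germ (U : Filter (Finset k)) l := RingHom.mk'
    ⟨⟨fun a => ((fun S => g S a : Finset k → l) : Filter.Germ (U : Filter (Finset k)) l), by
      refine Filter.Germ.coe_eq.2 ?_
      filter_upwards [hev {1}] with S hS
      exact h1 S (by simpa using hS)⟩, by
      intro a b
      refine Filter.Germ.coe_eq.2 ?_
      filter_upwards [hev {a, b, a * b}] with S hS
      exact h3 S a (hS (by simp)) b (hS (by simp)) (hS (by simp))⟩ (by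
      intro a b
      refine Filter.Germ.coe_eq.2 ?_
      filter_upwards [hev {a, b, a + b}] with S hS
      exact h2 S a (hS (by simp)) b (hS (by simp)) (hS (by simp)))
  exact ⟨Finset k, U, fun a S => g S a, f, fun a => rfl⟩

/-- `k(t)` maps to an ultrapower of `l(t)` with `t ↦ t`. -/
lemma aux_emb_rat {k l : Type} [Field k] [Field l]
    (h : ∀ (s : ℕ) (ψ : Language.ring.BoundedFormula Empty (1 + s)), ψ.IsQF →
      k ⊨ (ψ.exsN.alls : Language.ring.Sentence) → l ⊨ (ψ.exsN.alls : Language.ring.Sentence)) :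
    ∃ (ι : Type) (U : Ultrafilter ι) (f : RatFunc k →+* Filter.Germ (U : Filter ι) (RatFunc l)),
      f RatFunc.X = ((fun _ => RatFunc.X : ι → RatFunc l) :
        Filter.Germ (U : Filter ι) (RatFunc l)) := by
  classical
  obtain ⟨ι, U, g, f, hf⟩ := aux_emb h
  let c : Filter.Germ (U : Filter ι) l →+* Filter.Germ (U : Filter ι) (RatFunc l) := RingHom.mk'
    ⟨⟨Filter.Germ.map (RatFunc.C : l →+* RatFunc l), by
      refine Filter.Germ.coe_eq.2 (Filter.Eventually.of_forall fun i => ?_)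
      simp⟩, by
      intro a b
      induction a using Filter.Germ.inductionOn with | _ a => ?_
      induction b using Filter.Germ.inductionOn with | _ b => ?_
      refine Filter.Germ.coe_eq.2 (Filter.Eventually.of_forall fun i => ?_)
      simp⟩ (by
      intro a b
      induction a using Filter.Germ.inductionOn with | _ a => ?_
      induction b using Filter.Germ.inductionOn with | _ b => ?_
      refine Filter.Germ.coe_eq.2 (Filter.Eventually.of_forall fun i => ?_)
      simp)
  obtain ⟨F, -, hF⟩ := aux_ratHom (c.comp f)
    ((fun _ => RatFunc.X : ι → RatFunc l) : Filter.Germ (U : Filter ι) (RatFunc l)) (by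
    intro p hp
    have hp' : p.eval₂ (c.comp f) ((fun _ => RatFunc.X : ι → RatFunc l) :
        Filter.Germ (U : Filter ι) (RatFunc l)) =
        Filter.Germ.coeRingHom (U : Filter ι)
          (∑ n ∈ p.support, fun i => algebraMap (Polynomial l) (RatFunc l)
            (Polynomial.monomial n (g (p.coeff n) i))) := by
      rw [Polynomial.eval₂_eq_sum, Polynomial.sum, map_sum]
      refine Finset.sum_congr rfl fun n _ => ?_
      rw [RingHom.comp_apply, hf]
      refine Filter.Germ.coe_eq.2 (Filter.Eventually.of_forall fun i => ?_)
      simp [← Polynomial.C_mul_X_pow_eq_monomial]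
    rw [hp'] at hp
    have hp2 := Filter.Germ.coe_eq.1 (show _ = ((0 : ι → RatFunc l) :
      Filter.Germ (U : Filter ι) (RatFunc l)) from hp)
    ext n
    rw [Polynomial.coeff_zero]
    by_contra hn
    apply hn
    apply f.injective
    rw [hf, map_zero]
    refine Filter.Germ.coe_eq.2 ?_
    filter_upwards [hp2] with i hi
    rw [Finset.sum_apply, ← map_sum, Pi.zero_apply, map_eq_zero_iff _
      (RatFunc.algebraMap_injective l)] at hi
    have := congrArg (fun q => Polynomial.coeff q n) hi
    simpa [Polynomial.finsetSum_coeff, Polynomial.coeff_monomial, hn] using this)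
  exact ⟨ι, U, F, hF⟩

/-- `k(t)` maps to an ultrapower of `k` over `k` for infinite `k`. -/
lemma aux_emb_inf {k : Type} [Field k] [Infinite k] :
    ∃ (ι : Type) (U : Ultrafilter ι) (f : RatFunc k →+* Filter.Germ (U : Filter ι) k),
      ∀ a, f (RatFunc.C a) = ((fun _ => a : ι → k) : Filter.Germ (U : Filter ι) k) := by
  classical
  let U := Filter.hyperfilter k
  let c : (k → k) →+* Filter.Germ (U : Filter k) k := Filter.Germ.coeRingHom (U : Filter k)
  obtain ⟨F, hF, -⟩ := aux_ratHom (c.comp (Pi.constRingHom k k)) (c id) (by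
    intro p hp
    rw [← Polynomial.hom_eval₂] at hp
    have hp2 := Filter.Germ.coe_eq.1 (show _ = ((0 : k → k) :
      Filter.Germ (U : Filter k) k) from hp)
    by_contra hne
    have hfin : {a | p.eval a = 0}.Finite := by
      refine (p.roots.toFinset.finite_toSet).subset fun a ha => ?_
      simpa [hne] using ha
    have hfin2 : ∀ᶠ a in (U : Filter k), ¬ p.eval a = 0 :=
      Filter.hyperfilter_le_cofinite hfin.eventually_cofinite_notMem
    obtain ⟨a, ha, ha'⟩ := (hp2.and hfin2).exists
    apply ha'
    have := Polynomial.hom_eval₂ p (Pi.constRingHom k k) (Pi.evalRingHom (fun _ => k) a) id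
    rw [Pi.evalRingHom_apply, ha] at this
    rw [show (Pi.evalRingHom (fun _ => k) a).comp
      (Pi.constRingHom k k) = RingHom.id k from rfl] at this
    exact this.symm)
  exact ⟨k, U, F, fun a => hF a⟩

/-- if `Th_{∀₁∃}(k) ⊆ Th_{∀₁∃}(l)`, then `Th_{∀₁∃}(k(t)) ⊆ Th_{∀₁∃}(l(t))`:
if every ring sentence of the form `∀ x ∃ y₁ … yₛ ψ` (`ψ` quantifier-free) true in `k` is true
in `l`, then every such sentence true in the rational function field `k(t)` is true in `l(t)`. -/
theorem stmt11 (k l : Type) [Field k] [Field l]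
    (h : ∀ (s : ℕ) (ψ : Language.ring.BoundedFormula Empty (1 + s)), ψ.IsQF →
      k ⊨ (ψ.exsN.alls : Language.ring.Sentence) → l ⊨ (ψ.exsN.alls : Language.ring.Sentence)) :
    ∀ (s : ℕ) (ψ : Language.ring.BoundedFormula Empty (1 + s)), ψ.IsQF →
      RatFunc k ⊨ (ψ.exsN.alls : Language.ring.Sentence) →
      RatFunc l ⊨ (ψ.exsN.alls : Language.ring.Sentence) := by
  intro s ψ hψ hk
  rw [aux_sem] at hk ⊢
  intro x
  by_cases hx : ∃ c, x = RatFunc.C c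
  · obtain ⟨c, rfl⟩ := hx
    rcases finite_or_infinite k with hfin | hinf
    · obtain ⟨g, hg⟩ := aux_finite h
      obtain ⟨a, rfl⟩ := hg c
      obtain ⟨F, hF, -⟩ := aux_ratHom ((RatFunc.C : l →+* RatFunc l).comp g) RatFunc.X (by
        intro p hp
        have : p.eval₂ ((RatFunc.C : l →+* RatFunc l).comp g) RatFunc.X =
            algebraMap (Polynomial l) (RatFunc l) (p.map g) := by
          rw [← Polynomial.eval₂_map]
          induction p.map g using Polynomial.induction_on' with
          | add p q hp hq => simp [hp, hq]
          | monomial n a => simp [← Polynomial.C_mul_X_pow_eq_monomial]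
        rw [this, map_eq_zero_iff _ (RatFunc.algebraMap_injective l)] at hp
        exact (Polynomial.map_eq_zero g).1 hp)
      have := aux_transfer_hom F ψ hψ (RatFunc.C a) (hk _)
      rwa [hF] at this
    · obtain ⟨ι, U, F, hF⟩ := aux_emb_inf (k := k)
      have hk' : ∀ a : k, ∃ ys : Fin s → k, ψ.Realize default (Fin.append (fun _ => a) ys) :=
        fun a => aux_transfer U F ψ hψ _ a (hF a) (hk _)
      have hl := h s ψ hψ
      rw [aux_sem, aux_sem] at hl
      exact aux_transfer_hom (RatFunc.C : l →+* RatFunc l) ψ hψ c (hl hk' c)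
  · obtain ⟨ι, U, F, hF⟩ := aux_emb_rat h
    have h1 := aux_transfer U F ψ hψ _ _ hF (hk _)
    have htr := RatFunc.transcendental_of_ne_C x hx
    obtain ⟨G, -, hG⟩ := aux_ratHom (algebraMap l (RatFunc l)) x (by
      intro p hp
      exact (transcendental_iff.1 htr) p hp)
    have := aux_transfer_hom G ψ hψ _ h1
    rwa [hG] at this
end

section
/- Let k be an infinite field, let ψ(x, u₁,…,uₙ) be an existential ring formula, and let a₁,…,aₙ ∈ k. Then the rational function field k(t) satisfies ∀x ψ(x, a₁,…,aₙ) if and only if both of the following hold: (i) k(t) ⊨ ψ(t, a₁,…,aₙ), and (ii) k ⊨ ∀x ψ(x, a₁,…,aₙ). -/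
open FirstOrder Language

attribute [local instance] FirstOrder.Ring.compatibleRingOfRing

/-- An injective ring homomorphism as an embedding of structures. -/
def ringEmb {K L : Type*} [Ring K] [Ring L] (f : K →+* L) (hf : Function.Injective f) :
    K ↪[Language.ring] L where
  toFun := f
  inj' := hf
  map_fun' := by
    intro n g x
    cases g
    · exact map_add f _ _
    · exact map_mul f _ _
    · exact map_neg f _
    · exact map_zero f
    · exact map_one f
  map_rel' := by
    intro n r
    exact r.elim

theorem realize_exs_of_ringHom {K L : Type*} [Field K] [Field L] (f : K →+* L)
    {α : Type*} {s : ℕ} (ψ : Language.ring.BoundedFormula α s) (hψ : ψ.IsQF) (v : α → K)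
    (h : (ψ.exs : Language.ring.Formula _).Realize v) :
    (ψ.exs : Language.ring.Formula _).Realize (f ∘ v) := by
  rw [BoundedFormula.realize_exs] at h ⊢
  obtain ⟨xs, h⟩ := h
  refine ⟨f ∘ xs, ?_⟩
  exact (hψ.realize_embedding (ringEmb f f.injective)).2 h

open Filter in
theorem eventually_denom {k : Type*} [Field k] (f : RatFunc k) :
    ∀ᶠ c in cofinite, (f.denom).eval₂ (RingHom.id k) c ≠ 0 := by
  have : {c | (f.denom).IsRoot c}.Finite := Polynomial.finite_setOfPred_isRoot (RatFunc.denom_ne_zero f)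
  filter_upwards [this.compl_mem_cofinite] with c hc
  simpa [Polynomial.eval₂_id] using hc

open Filter in
theorem eventually_eval_ne_zero {k : Type*} [Field k] (f : RatFunc k) (hf : f ≠ 0) :
    ∀ᶠ c in cofinite, f.eval (RingHom.id k) c ≠ 0 := by
  filter_upwards [eventually_denom f, eventually_denom f⁻¹] with c h1 h2 h3
  have := RatFunc.eval_mul _ _ h1 h2
  rw [mul_inv_cancel₀ hf, h3] at this
  simp at this

open Filter in
theorem eventually_eval_neg {k : Type*} [Field k] (f : RatFunc k) :
    ∀ᶠ c in cofinite, (-f).eval (RingHom.id k) c = - f.eval (RingHom.id k) c := by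
  filter_upwards [eventually_denom f, eventually_denom (-f)] with c h1 h2
  have := RatFunc.eval_add _ _ h1 h2
  rw [add_neg_cancel, RatFunc.eval_zero] at this
  exact (neg_eq_of_add_eq_zero_right this.symm).symm

open Filter in
theorem eventually_term {k : Type*} [Field k] {α : Type*} (τ : Language.ring.Term α)
    (v : α → RatFunc k) :
    ∀ᶠ c in cofinite, (τ.realize v).eval (RingHom.id k) c =
      τ.realize (fun i => (v i).eval (RingHom.id k) c) := by
  induction τ with
  | var i => simp
  | func g ts ih =>
    have ih' := eventually_all.2 ih
    have hd := eventually_all.2 fun i => eventually_denom ((ts i).realize v)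
    cases g
    · filter_upwards [ih', hd] with c h1 h2
      exact (RatFunc.eval_add _ _ (h2 0) (h2 1)).trans (congrArg₂ _ (h1 0) (h1 1))
    · filter_upwards [ih', hd] with c h1 h2
      exact (RatFunc.eval_mul _ _ (h2 0) (h2 1)).trans (congrArg₂ _ (h1 0) (h1 1))
    · filter_upwards [ih', eventually_eval_neg ((ts 0).realize v)] with c h1 h2
      exact h2.trans (congrArg _ (h1 0))
    · exact Eventually.of_forall fun c => RatFunc.eval_zero _ _
    · exact Eventually.of_forall fun c => RatFunc.eval_one _ _

open Filter in
theorem eventually_qf {k : Type*} [Field k] {α : Type*} {s : ℕ}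
    (ψ : Language.ring.BoundedFormula α s) (hψ : ψ.IsQF)
    (v : α → RatFunc k) (xs : Fin s → RatFunc k) :
    ∀ᶠ c in cofinite, (ψ.Realize v xs ↔
      ψ.Realize (fun i => (v i).eval (RingHom.id k) c)
        (fun i => (xs i).eval (RingHom.id k) c)) := by
  induction hψ with
  | falsum => exact Eventually.of_forall fun c => Iff.rfl
  | imp _ _ h1 h2 =>
    filter_upwards [h1, h2] with c h1 h2
    simp only [BoundedFormula.realize_imp, h1, h2]
  | of_isAtomic h =>
    cases h with
    | rel R => exact R.elim
    | equal t₁ t₂ =>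
      simp only [BoundedFormula.realize_bdEqual]
      have e : ∀ c : k, (Sum.elim (fun i => (v i).eval (RingHom.id k) c)
          (fun i => (xs i).eval (RingHom.id k) c)) =
          fun i => ((Sum.elim v xs) i).eval (RingHom.id k) c := by
        intro c; ext i; cases i <;> rfl
      simp only [e]
      set f := t₁.realize (Sum.elim v xs) with hf
      set g := t₂.realize (Sum.elim v xs) with hg
      by_cases hfg : f = g
      · filter_upwards [eventually_term t₁ (Sum.elim v xs),
          eventually_term t₂ (Sum.elim v xs)] with c h1 h2
        rw [← h1, ← h2, ← hf, ← hg, hfg]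
        simp
      · filter_upwards [eventually_term t₁ (Sum.elim v xs),
          eventually_term t₂ (Sum.elim v xs), eventually_eval_ne_zero _ (sub_ne_zero.2 hfg),
          eventually_denom (f - g), eventually_denom g] with c h1 h2 h3 h4 h5
        rw [← h1, ← h2, ← hf, ← hg]
        refine iff_of_false hfg fun h => h3 ?_
        have := RatFunc.eval_add _ _ h4 h5
        rw [sub_add_cancel, h] at this
        exact right_eq_add.1 this

/-- let `k` be an infinite field, `ψ(x, u₁, …, uₙ)` an existential ring formula
(given as `ψ₀.exs` with `ψ₀` quantifier-free) and `a₁, …, aₙ ∈ k`.  Then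
`k(t) ⊨ ∀ x ψ(x, a⃗)` iff `k(t) ⊨ ψ(t, a⃗)` and `k ⊨ ∀ x ψ(x, a⃗)`. -/
theorem stmt13 (k : Type*) [Field k] [Infinite k]
    (n s : ℕ) (ψ : Language.ring.BoundedFormula (Unit ⊕ Fin n) s) (hψ : ψ.IsQF)
    (a : Fin n → k) :
    (∀ x : RatFunc k, (ψ.exs : Language.ring.Formula _).Realize
        (Sum.elim (fun _ : Unit => x) (fun i => algebraMap k (RatFunc k) (a i)))) ↔
      ((ψ.exs : Language.ring.Formula _).Realize
          (Sum.elim (fun _ : Unit => (RatFunc.X : RatFunc k))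
            (fun i => algebraMap k (RatFunc k) (a i))) ∧
        ∀ x : k, (ψ.exs : Language.ring.Formula _).Realize
          (Sum.elim (fun _ : Unit => x) a)) := by
  constructor
  · intro h
    refine ⟨h _, fun x => ?_⟩
    have hx := h (algebraMap k (RatFunc k) x)
    rw [BoundedFormula.realize_exs] at hx ⊢
    obtain ⟨ys, hy⟩ := hx
    obtain ⟨c, hc⟩ := (eventually_qf ψ hψ _ ys).exists
    refine ⟨fun i => (ys i).eval (RingHom.id k) c, ?_⟩
    convert hc.1 hy using 1
    ext i
    cases i <;> simp
  · rintro ⟨h1, h2⟩ x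
    by_cases hx : ∃ c, x = RatFunc.C c
    · obtain ⟨c, rfl⟩ := hx
      convert realize_exs_of_ringHom (algebraMap k (RatFunc k)) ψ hψ _ (h2 c) using 1
      ext i
      cases i <;> simp
    · have ht := x.transcendental_of_ne_C hx
      let φ : RatFunc k →ₐ[k] RatFunc k := RatFunc.liftAlgHom (Polynomial.aeval x)
        (nonZeroDivisors_le_comap_nonZeroDivisors_of_injective _
          (transcendental_iff_injective.1 ht))
      have hφ : φ RatFunc.X = x := by
        have := RatFunc.liftAlgHom_apply_div (Polynomial.aeval x)
          (nonZeroDivisors_le_comap_nonZeroDivisors_of_injective _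
          (transcendental_iff_injective.1 ht)) Polynomial.X 1
        simpa using this
      convert realize_exs_of_ringHom (φ : RatFunc k →+* RatFunc k) ψ hψ _ h1 using 1
      ext i
      cases i
      · simp [hφ]
      · exact (φ.commutes _).symm
end

section
/- Let k be a field and let γ(x) be an existential ring formula such that k(t) ⊨ γ(b) for every b ∈ k and k(t) ⊭ γ(t) (that is, k ⊆ γ(k(t)) ⊆ k(t) \ {t}). Then for every existential ring formula ψ(u₁,…,uₙ, w) and all a₁,…,aₙ ∈ k: k(t) ⊨ ψ(a₁,…,aₙ, t) if and only if k(t) ⊨ ∀x (ψ(a₁,…,aₙ, x) ∨ γ(x)). -/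
open FirstOrder Language

attribute [local instance] FirstOrder.Ring.compatibleRingOfRing

/-- let `k` be a field and `γ(x)` an existential ring formula with
`k ⊆ γ(k(t)) ⊆ k(t) \ {t}`.  Then for every existential ring formula `ψ(u₁, …, uₙ, w)` and all
`a₁, …, aₙ ∈ k`: `k(t) ⊨ ψ(a⃗, t)` iff `k(t) ⊨ ∀ x (ψ(a⃗, x) ∨ γ(x))`. -/
theorem stmt15 (k : Type*) [Field k]
    (sγ : ℕ) (γ : Language.ring.BoundedFormula Unit sγ) (hγ : γ.IsQF)
    (hγk : ∀ b : k, (γ.exs : Language.ring.Formula _).Realize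
      (fun _ : Unit => algebraMap k (RatFunc k) b))
    (hγt : ¬ (γ.exs : Language.ring.Formula _).Realize
      (fun _ : Unit => (RatFunc.X : RatFunc k)))
    (n s : ℕ) (ψ : Language.ring.BoundedFormula (Fin n ⊕ Unit) s) (hψ : ψ.IsQF)
    (a : Fin n → k) :
    (ψ.exs : Language.ring.Formula _).Realize
        (Sum.elim (fun i => algebraMap k (RatFunc k) (a i))
          (fun _ : Unit => (RatFunc.X : RatFunc k))) ↔
      ∀ x : RatFunc k,
        (ψ.exs : Language.ring.Formula _).Realize
            (Sum.elim (fun i => algebraMap k (RatFunc k) (a i)) (fun _ : Unit => x)) ∨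
          (γ.exs : Language.ring.Formula _).Realize (fun _ : Unit => x) := by
  constructor
  · intro h x
    by_cases hx : ∃ c, x = RatFunc.C c
    · obtain ⟨c, rfl⟩ := hx
      exact Or.inr (hγk c)
    · left
      have ht : Transcendental k x := RatFunc.transcendental_of_ne_C x hx
      have hinj : Function.Injective (Polynomial.aeval (R := k) x) :=
        transcendental_iff_injective.mp ht
      let f : RatFunc k →ₐ[k] RatFunc k := RatFunc.liftAlgHom (Polynomial.aeval x)
        (nonZeroDivisors_le_comap_nonZeroDivisors_of_injective _ hinj)
      have hfX : f RatFunc.X = x := by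
        simp [f, RatFunc.liftAlgHom_apply]
      let F : Language.ring.Embedding (RatFunc k) (RatFunc k) :=
        { toFun := f
          inj' := f.toRingHom.injective
          map_fun' := fun {n} g => by
            intro y
            cases g
            · exact map_add f _ _
            · exact map_mul f _ _
            · exact map_neg f _
            · exact map_zero f
            · exact map_one f
          map_rel' := fun {n} g => by cases g }
      rw [BoundedFormula.realize_exs] at h ⊢
      obtain ⟨xs, h⟩ := h
      refine ⟨F ∘ xs, ?_⟩
      have h2 := (hψ.realize_embedding F).mpr h
      convert h2 using 1
      funext i
      rcases i with i | i
      · exact (f.commutes (a i)).symm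
      · exact hfX.symm
  · intro h
    exact (h RatFunc.X).resolve_right hγt
end

section
/- Let k be a field, K = k((t)) the field of formal Laurent series over k, and t ∈ K the Laurent series with single coefficient 1 in degree 1. For z ∈ K, there exists a k-algebra homomorphism σ : K → K with σ(t) = z if and only if z ≠ 0 and v_t(z) > 0. In other words, {σ(t) : σ a k-algebra endomorphism of K} = 𝔪 \ {0}, where 𝔪 is the maximal ideal of the valuation ring k[[t]]. -/
open PowerSeries in
lemma aux_root (k : Type*) [Field k] (n : ℕ) (hn : (n : k) ≠ 0) (c : k) :
    ∃ g : PowerSeries k, g ^ n = 1 + C c * X := by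
  have h0 : constantCoeff ((1 + X : PowerSeries k) ^ n - 1) = 0 := by simp
  have h1 : coeff 1 ((1 + X : PowerSeries k) ^ n - 1) = (n : k) := by
    rw [map_sub, ← Polynomial.coe_one, ← Polynomial.coe_X, ← Polynomial.coe_add,
      ← Polynomial.coe_pow, Polynomial.coeff_coe, Polynomial.coeff_coe,
      Polynomial.coeff_one_add_X_pow]
    simp [Polynomial.coeff_one]
  have hu : IsUnit (coeff 1 ((1 + X : PowerSeries k) ^ n - 1)) := by
    rw [h1]; exact hn.isUnit
  have h2 := subst_substInvOfIsUnit_right ((1 + X : PowerSeries k) ^ n - 1) h0 hu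
  have hs := HasSubst.substInvOfIsUnit ((1 + X : PowerSeries k) ^ n - 1) hu
  set Q := substInvOfIsUnit ((1 + X : PowerSeries k) ^ n - 1) hu
  rw [← coe_substAlgHom hs, map_sub, map_pow, map_add, map_one, substAlgHom_X] at h2
  refine ⟨rescale c (1 + Q), ?_⟩
  rw [← map_pow, sub_eq_iff_eq_add.mp h2, map_add, map_one, rescale_X, add_comm]

lemma aux_order (k : Type*) [Field k] (σ : LaurentSeries k →ₐ[k] LaurentSeries k) (c : k) :
    (1 + HahnSeries.C c * σ (HahnSeries.single (1 : ℤ) (1 : k))).order = 0 ∧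
    (1 + HahnSeries.C c * σ (HahnSeries.single (1 : ℤ) (1 : k))) ≠ 0 := by
  have e : (1 + HahnSeries.C c * σ (HahnSeries.single (1 : ℤ) (1 : k))) =
      σ (HahnSeries.ofPowerSeries ℤ k (1 + PowerSeries.C c * PowerSeries.X)) := by
    have hc : σ (HahnSeries.C c) = HahnSeries.C c := by
      have := σ.commutes c
      rwa [LaurentSeries.algebraMap_apply] at this
    rw [map_add (HahnSeries.ofPowerSeries ℤ k), map_one (HahnSeries.ofPowerSeries ℤ k),
      map_mul (HahnSeries.ofPowerSeries ℤ k), PowerSeries.coe_C, PowerSeries.coe_X,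
      map_add σ, map_one σ, map_mul σ, hc]
  rw [e]
  have hne : σ (HahnSeries.ofPowerSeries ℤ k (1 + PowerSeries.C c * PowerSeries.X)) ≠ 0 := by
    rw [map_ne_zero_iff σ σ.toRingHom.injective,
      map_ne_zero_iff _ HahnSeries.ofPowerSeries_injective]
    intro h
    simpa using congrArg PowerSeries.constantCoeff h
  refine ⟨?_, hne⟩
  set y := σ (HahnSeries.ofPowerSeries ℤ k (1 + PowerSeries.C c * PowerSeries.X))
  have key : ∀ n : ℕ, (n : k) ≠ 0 → (n : ℤ) ∣ y.order := by
    intro n hn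
    obtain ⟨g, hg⟩ := aux_root k n hn c
    have : y = (σ (HahnSeries.ofPowerSeries ℤ k g)) ^ n := by
      rw [← map_pow, ← map_pow, hg]
    rw [this, HahnSeries.order_pow]
    exact ⟨_, nsmul_eq_mul _ _⟩
  have hex : ∃ n : ℕ, y.order.natAbs < n ∧ (n : k) ≠ 0 := by
    by_cases h : ((y.order.natAbs + 1 : ℕ) : k) = 0
    · refine ⟨y.order.natAbs + 1 + 1, by omega, ?_⟩
      rw [Nat.cast_succ, h]; simp
    · exact ⟨_, by omega, h⟩
  obtain ⟨n, hn, hn'⟩ := hex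
  exact Int.eq_zero_of_dvd_of_natAbs_lt_natAbs (key n hn') (by simpa using hn)

/-- let `k` be a field, `K = k((t))` the field of formal Laurent series and
`t = single 1 1`.  For `z ∈ K` there is a `k`-algebra endomorphism `σ : K → K` with `σ(t) = z`
iff `z ≠ 0` and `v_t(z) > 0`; i.e. `{σ(t) : σ ∈ End(K/k)} = 𝔪 \ {0}`. -/
theorem stmt16 (k : Type*) [Field k] (z : LaurentSeries k) :
    (∃ σ : LaurentSeries k →ₐ[k] LaurentSeries k,
        σ (HahnSeries.single (1 : ℤ) (1 : k)) = z) ↔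
      (z ≠ 0 ∧ 0 < z.order) := by
  constructor
  · rintro ⟨σ, rfl⟩
    have hne : σ (HahnSeries.single (1 : ℤ) (1 : k)) ≠ 0 := by
      rw [map_ne_zero_iff σ σ.toRingHom.injective]
      simp
    refine ⟨hne, ?_⟩
    have A := aux_order k σ
    set z := σ (HahnSeries.single (1 : ℤ) (1 : k))
    have hz := HahnSeries.coeff_order_eq_zero.not.mpr hne
    by_contra! hle
    rcases hle.lt_or_eq with h | h
    · obtain ⟨h1, h2⟩ := A 1
      rw [map_one, one_mul] at h1
      have h3 : (1 + z).coeff z.order = 0 :=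
        HahnSeries.coeff_eq_zero_of_lt_order (by rw [h1]; exact h)
      rw [HahnSeries.coeff_add, HahnSeries.coeff_one, if_neg h.ne, zero_add] at h3
      exact hz h3
    · rw [h] at hz
      obtain ⟨h1, h2⟩ := A (-(z.coeff 0)⁻¹)
      have h3 := HahnSeries.coeff_order_eq_zero.not.mpr h2
      rw [h1] at h3
      apply h3
      rw [HahnSeries.coeff_add, HahnSeries.coeff_one, if_pos rfl, HahnSeries.C_mul_eq_smul,
        HahnSeries.coeff_smul, smul_eq_mul, neg_mul, inv_mul_cancel₀ hz]
      simp
  · rintro ⟨hz, ho⟩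
    obtain ⟨m, hm⟩ := Int.eq_ofNat_of_zero_le ho.le
    have hp := LaurentSeries.X_order_mul_powerSeriesPart (f := z) hm.symm
    set p : PowerSeries k := PowerSeries.X ^ m * z.powerSeriesPart
    have hs : PowerSeries.HasSubst p := by
      apply PowerSeries.HasSubst.of_constantCoeff_zero'
      have : m ≠ 0 := by omega
      simp [p, this]
    let φ : PowerSeries k →+* LaurentSeries k :=
      (HahnSeries.ofPowerSeries ℤ k).comp
        (PowerSeries.substAlgHom (R := k) hs : PowerSeries k →ₐ[k] PowerSeries k).toRingHom
    have hX : φ PowerSeries.X = z := by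
      change HahnSeries.ofPowerSeries ℤ k (PowerSeries.substAlgHom hs PowerSeries.X) = z
      rw [PowerSeries.substAlgHom_X]
      exact hp
    have hC : ∀ c : k, φ (PowerSeries.C c) = HahnSeries.C c := by
      intro c
      change HahnSeries.ofPowerSeries ℤ k (PowerSeries.substAlgHom hs (PowerSeries.C c)) = _
      rw [← PowerSeries.coe_C]
      exact congrArg _ ((PowerSeries.substAlgHom (R := k) hs).commutes c)
    have hu : ∀ y : Submonoid.powers (PowerSeries.X : PowerSeries k), IsUnit (φ y) := by
      rintro ⟨_, n, rfl⟩
      simp only [map_pow, hX]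
      exact (pow_ne_zero n hz).isUnit
    let ψ : LaurentSeries k →+* LaurentSeries k :=
      IsLocalization.lift (M := Submonoid.powers (PowerSeries.X : PowerSeries k)) hu
    have hψ : ∀ f : PowerSeries k, ψ (HahnSeries.ofPowerSeries ℤ k f) = φ f :=
      fun f => IsLocalization.lift_eq hu f
    refine ⟨{ ψ with commutes' := ?_ }, ?_⟩
    · intro c
      change ψ _ = _
      rw [LaurentSeries.algebraMap_apply]
      exact (congrArg ψ (PowerSeries.coe_C c).symm).trans ((hψ _).trans (hC c))
    · change ψ _ = _
      rw [← PowerSeries.coe_X, hψ, hX]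
end

section
/- Let k be a field, K = k((t)) the field of formal Laurent series over k, and t ∈ K the Laurent series with single coefficient 1 in degree 1. For z ∈ K, there exists a k-algebra automorphism σ of K with σ(t) = z if and only if z ≠ 0 and v_t(z) = 1. In other words, {σ(t) : σ ∈ Aut(K/k)} = 𝔪 \ 𝔪², the set of uniformizers of the t-adic valuation. -/
namespace Stmt17

open PowerSeries HahnSeries

variable {k : Type*} [Field k]

lemma add_nonneg_order {x y : LaurentSeries k} (hx : 0 ≤ x.order) (hy : 0 ≤ y.order) :
    0 ≤ (x + y).order := by
  by_cases h : x + y = 0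
  · rw [h, HahnSeries.order_zero]
  · exact le_trans (le_min hx hy) (HahnSeries.min_order_le_order_add h)

lemma inv_order {x : LaurentSeries k} (hx : x ≠ 0) : (x⁻¹).order = - x.order := by
  have h := HahnSeries.order_mul hx (inv_ne_zero hx)
  rw [mul_inv_cancel₀ hx, HahnSeries.order_one] at h
  omega

/-- elements of the maximal ideal are of the form `y ^ n + y`. -/
lemma exists_root (f : PowerSeries k) (hf : f.constantCoeff = 0) (n : ℕ) (hn : 2 ≤ n) :
    ∃ y : PowerSeries k, y ^ n + y = f := by
  set P : PowerSeries k := X ^ n + X with hP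
  have h0 : P.constantCoeff = 0 := by
    simp [hP]; omega
  have h1 : IsUnit (P.coeff 1) := by
    have : P.coeff 1 = 1 := by
      simp [hP, coeff_X_pow]; omega
    rw [this]; exact isUnit_one
  have hfs : HasSubst f := HasSubst.of_constantCoeff_zero' hf
  have hQ := HasSubst.substInvOfIsUnit P h1
  have h2 := subst_substInvOfIsUnit_right P h0 h1
  generalize P.substInvOfIsUnit h1 = Q at hQ h2
  rw [hP, subst_add hQ, subst_pow hQ, subst_X hQ] at h2
  refine ⟨Q.subst f, ?_⟩
  rw [← subst_pow hfs, ← subst_add hfs]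
  refine (congrArg (PowerSeries.subst f) h2).trans ?_
  exact subst_X hfs

lemma order_of_roots (g : LaurentSeries k)
    (h : ∀ n : ℕ, 2 ≤ n → ∃ y : LaurentSeries k, y ^ n + y = g) : 0 ≤ g.order := by
  by_contra! hg
  obtain ⟨y, hy⟩ := h (g.order.natAbs + 1) (by omega)
  set n := g.order.natAbs + 1 with hn
  have ho : (y ^ n).order = n * y.order := by
    rw [HahnSeries.order_pow]; simp
  by_cases he : 0 ≤ y.order
  · have : 0 ≤ (y ^ n + y).order := add_nonneg_order (by rw [ho]; positivity) he
    rw [hy] at this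
    omega
  · push Not at he
    have hy0 : y ≠ 0 := by
      rintro rfl
      simp at he
    have hlt : n * y.order < y.order := by
      have : (2 : ℤ) ≤ n := by omega
      nlinarith
    have hc : (y ^ n + y).coeff (n * y.order) ≠ 0 := by
      rw [HahnSeries.coeff_add, HahnSeries.coeff_eq_zero_of_lt_order hlt, add_zero, ← ho]
      exact HahnSeries.coeff_order_eq_zero.not.2 (pow_ne_zero _ hy0)
    have h3 := HahnSeries.order_le_of_coeff_ne_zero hc
    rw [hy] at h3
    have : n * y.order ≤ - (n : ℤ) := by nlinarith
    omega

lemma exists_ps (f : LaurentSeries k) (hf : 0 ≤ f.order) :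
    ∃ F : PowerSeries k, HahnSeries.ofPowerSeries ℤ k F = f := by
  obtain ⟨n, hn⟩ := Int.eq_ofNat_of_zero_le hf
  exact ⟨_, LaurentSeries.X_order_mul_powerSeriesPart hn.symm⟩

lemma aut_nonneg (σ : LaurentSeries k ≃ₐ[k] LaurentSeries k) (f : LaurentSeries k)
    (hf : 0 ≤ f.order) : 0 ≤ (σ f).order := by
  obtain ⟨F, rfl⟩ := exists_ps f hf
  set G : PowerSeries k := F - C F.constantCoeff with hG
  have hG0 : G.constantCoeff = 0 := by simp [hG]
  have hF : F = G + C F.constantCoeff := by simp [hG]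
  rw [hF, map_add, map_add, HahnSeries.ofPowerSeries_C, ← LaurentSeries.algebraMap_apply,
    AlgEquiv.commutes, LaurentSeries.algebraMap_apply]
  refine add_nonneg_order (order_of_roots _ fun n hn => ?_) (by rw [HahnSeries.order_C])
  obtain ⟨y, hy⟩ := exists_root G hG0 n hn
  exact ⟨σ (HahnSeries.ofPowerSeries ℤ k y), by rw [← hy]; simp⟩

lemma aut_t_pos (σ : LaurentSeries k ≃ₐ[k] LaurentSeries k) :
    1 ≤ (σ (HahnSeries.single (1 : ℤ) (1 : k))).order := by
  have ht : (HahnSeries.single (1 : ℤ) (1 : k)) ≠ 0 := by simp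
  have hto : (HahnSeries.single (1 : ℤ) (1 : k)).order = 1 := HahnSeries.order_single one_ne_zero
  set t : LaurentSeries k := HahnSeries.single (1 : ℤ) (1 : k)
  have hs : σ t ≠ 0 := by simpa using ht
  by_contra! h
  have h1 := aut_nonneg σ.symm (σ t)⁻¹ (by rw [inv_order hs]; omega)
  rw [map_inv₀, AlgEquiv.symm_apply_apply, inv_order ht, hto] at h1
  omega

lemma aut_t (σ : LaurentSeries k ≃ₐ[k] LaurentSeries k) :
    (σ (HahnSeries.single (1 : ℤ) (1 : k))).order = 1 := by
  have h1 := aut_t_pos σ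
  have h2 := aut_t_pos σ.symm
  have ht : (HahnSeries.single (1 : ℤ) (1 : k)) ≠ 0 := by simp
  have hto : (HahnSeries.single (1 : ℤ) (1 : k)).order = 1 := HahnSeries.order_single one_ne_zero
  set t : LaurentSeries k := HahnSeries.single (1 : ℤ) (1 : k)
  have hs : σ t ≠ 0 := by simpa using ht
  have hs' : σ.symm t ≠ 0 := by simpa using ht
  by_contra h
  have h3 := aut_nonneg σ.symm (σ t * (t ^ 2)⁻¹) (by
    rw [HahnSeries.order_mul hs (inv_ne_zero (pow_ne_zero _ ht)), inv_order (pow_ne_zero _ ht),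
      HahnSeries.order_pow, hto]
    simp; omega)
  rw [map_mul, map_inv₀, map_pow, AlgEquiv.symm_apply_apply,
    HahnSeries.order_mul ht (inv_ne_zero (pow_ne_zero _ hs')), inv_order (pow_ne_zero _ hs'),
      HahnSeries.order_pow, hto] at h3
  simp at h3
  omega

lemma exists_aut (z : LaurentSeries k) (hz : z ≠ 0) (ho : z.order = 1) :
    ∃ σ : LaurentSeries k ≃ₐ[k] LaurentSeries k,
        σ (HahnSeries.single (1 : ℤ) (1 : k)) = z := by
  obtain ⟨P, rfl⟩ := exists_ps z (by omega)
  have h0 : P.constantCoeff = 0 := by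
    rw [← PowerSeries.coeff_zero_eq_constantCoeff_apply, ← LaurentSeries.coeff_coe_powerSeries]
    exact HahnSeries.coeff_eq_zero_of_lt_order (by rw [ho]; simp)
  have h1 : IsUnit (P.coeff 1) := by
    rw [isUnit_iff_ne_zero, ← LaurentSeries.coeff_coe_powerSeries, Nat.cast_one, ← ho]
    exact HahnSeries.coeff_order_eq_zero.not.2 hz
  have hPs : HasSubst P := HasSubst.of_constantCoeff_zero' h0
  have hQ := HasSubst.substInvOfIsUnit P h1
  have e1 := subst_substInvOfIsUnit_right P h0 h1
  have e2 := subst_substInvOfIsUnit_left P h0 h1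
  generalize P.substInvOfIsUnit h1 = Q at hQ e1 e2
  obtain ⟨φ, hφ⟩ : ∃ φ : PowerSeries k →ₐ[k] PowerSeries k, ∀ f, φ f = PowerSeries.subst P f :=
    ⟨substAlgHom hPs, fun f => by rw [coe_substAlgHom]⟩
  obtain ⟨ψ, hψ⟩ : ∃ φ : PowerSeries k →ₐ[k] PowerSeries k, ∀ f, φ f = PowerSeries.subst Q f :=
    ⟨substAlgHom hQ, fun f => by rw [coe_substAlgHom]⟩
  have hφψ : ∀ f, φ (ψ f) = f := fun f => by
    rw [hφ, hψ]
    refine (subst_comp_subst_apply hQ hPs f).trans ?_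
    rw [e2, X_subst]
  have hψφ : ∀ f, ψ (φ f) = f := fun f => by
    rw [hφ, hψ]
    refine (subst_comp_subst_apply hPs hQ f).trans ?_
    rw [e1, X_subst]
  let e : PowerSeries k ≃ₐ[k] PowerSeries k :=
    AlgEquiv.ofAlgHom φ ψ (AlgHom.ext hφψ) (AlgHom.ext hψφ)
  let E : LaurentSeries k ≃+* LaurentSeries k :=
    IsFractionRing.ringEquivOfRingEquiv e.toRingEquiv
  have hE : ∀ f : PowerSeries k, E (HahnSeries.ofPowerSeries ℤ k f) =
      HahnSeries.ofPowerSeries ℤ k (φ f) := fun f =>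
    IsFractionRing.ringEquivOfRingEquiv_algebraMap e.toRingEquiv f
  refine ⟨AlgEquiv.ofRingEquiv (f := E) fun r => ?_, ?_⟩
  · rw [LaurentSeries.algebraMap_apply, ← HahnSeries.ofPowerSeries_C, hE]
    exact congrArg _ (φ.commutes r)
  · rw [AlgEquiv.ofRingEquiv_apply, ← HahnSeries.ofPowerSeries_X, hE]
    rw [hφ, subst_X hPs]

end Stmt17


/-- let `k` be a field, `K = k((t))` the field of formal Laurent series and
`t = single 1 1`.  For `z ∈ K` there is a `k`-algebra automorphism `σ` of `K` with `σ(t) = z`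
iff `z ≠ 0` and `v_t(z) = 1`; i.e. `{σ(t) : σ ∈ Aut(K/k)} = 𝔪 \ 𝔪²`, the set of uniformizers. -/
theorem stmt17 (k : Type*) [Field k] (z : LaurentSeries k) :
    (∃ σ : LaurentSeries k ≃ₐ[k] LaurentSeries k,
        σ (HahnSeries.single (1 : ℤ) (1 : k)) = z) ↔
      (z ≠ 0 ∧ z.order = 1) := by
  constructor
  · rintro ⟨σ, rfl⟩
    exact ⟨by simp, Stmt17.aut_t σ⟩
  · rintro ⟨hz, ho⟩
    exact Stmt17.exists_aut z hz ho
end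

section
/- Let Γ₂, Γ₃, Γ₄ be the tournaments (directed graphs, in the language with one binary relation E) on 2, 3, 4 vertices given respectively by: a single directed edge; a directed 3-cycle; and a directed 3-cycle together with a fourth vertex having edges to all three cycle vertices. Let N be the disjoint union of countably many copies of Γ₂ and countably many copies of Γ₄, and let M be the disjoint union of N and one copy of Γ₃. Then: (1) Th_{∀₂∃}(M) = Th_{∀₂∃}(N), i.e., the same sentences of the form ∀x₁∀x₂ ∃y₁…∃yₛ ψ (ψ quantifier-free) hold in M and in N; but (2) the sentence ∀x ( (∀y ¬xEy) ∨ (∀y ¬yEx) ∨ ∃z₁∃z₂∃z₃ ( ⋀_{i≠j} zᵢ ≠ z_j ∧ ⋀_i (xEzᵢ ∨ zᵢEx) ) ) is true in N and false in M. -/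
open FirstOrder Language

/-- The edge relation of the tournament `Γ₂`: a single directed edge `0 → 1`. -/
def E2 : Fin 2 → Fin 2 → Prop := fun a b => a = 0 ∧ b = 1

/-- The edge relation of the tournament `Γ₃`: a directed 3-cycle `0 → 1 → 2 → 0`. -/
def E3 : Fin 3 → Fin 3 → Prop := fun a b =>
  (a = 0 ∧ b = 1) ∨ (a = 1 ∧ b = 2) ∨ (a = 2 ∧ b = 0)

/-- The edge relation of the tournament `Γ₄`: a directed 3-cycle `0 → 1 → 2 → 0` together with a
fourth vertex `3` having edges to all three cycle vertices. -/
def E4 : Fin 4 → Fin 4 → Prop := fun a b =>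
  (a = 0 ∧ b = 1) ∨ (a = 1 ∧ b = 2) ∨ (a = 2 ∧ b = 0) ∨ (a = 3 ∧ (b = 0 ∨ b = 1 ∨ b = 2))

/-- The vertex set of `N = ω·Γ₂ ∪ ω·Γ₄`. -/
abbrev NVert : Type := (ℕ × Fin 2) ⊕ (ℕ × Fin 4)

/-- The edge relation of `N = ω·Γ₂ ∪ ω·Γ₄` (disjoint unions, edges only within components). -/
def EN : NVert → NVert → Prop
  | Sum.inl (m, a), Sum.inl (m', b) => m = m' ∧ E2 a b
  | Sum.inr (m, a), Sum.inr (m', b) => m = m' ∧ E4 a b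
  | _, _ => False

/-- The vertex set of `M = N ∪ Γ₃`. -/
abbrev MVert : Type := NVert ⊕ Fin 3

/-- The edge relation of `M = N ∪ Γ₃`. -/
def EM : MVert → MVert → Prop
  | Sum.inl x, Sum.inl y => EN x y
  | Sum.inr a, Sum.inr b => E3 a b
  | _, _ => False

/-- A directed graph as a structure in Mathlib's language of graphs
(one binary relation symbol `E`). -/
def dirGraphStructure {V : Type*} (E : V → V → Prop) : Language.graph.Structure V where
  RelMap | .adj => fun x => E (x 0) (x 1)

instance : Language.graph.Structure NVert := dirGraphStructure EN

instance : Language.graph.Structure MVert := dirGraphStructure EM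

def PresEmb {A B : Type} [Language.graph.Structure A] [Language.graph.Structure B]
    (f : A ↪[Language.graph] B) {n : ℕ} (φ : Language.graph.BoundedFormula Empty n) : Prop :=
  ∀ (v : Empty → A) (xs : Fin n → A), φ.Realize v xs → φ.Realize (f ∘ v) (f ∘ xs)

theorem presEmb_ex {A B : Type} [Language.graph.Structure A] [Language.graph.Structure B]
    (f : A ↪[Language.graph] B) {n : ℕ} (φ : Language.graph.BoundedFormula Empty (n + 1))
    (h : PresEmb f φ) : PresEmb f φ.ex := by
  intro v xs hx
  rw [BoundedFormula.realize_ex] at hx ⊢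
  obtain ⟨a, ha⟩ := hx
  refine ⟨f a, ?_⟩
  have := h v _ ha
  rwa [Fin.comp_snoc] at this

theorem presEmb_exsN {A B : Type} [Language.graph.Structure A] [Language.graph.Structure B]
    (f : A ↪[Language.graph] B) {n s : ℕ} (φ : Language.graph.BoundedFormula Empty (n + s))
    (h : PresEmb f φ) : PresEmb f (BoundedFormula.exsN (m := n) (s := s) φ) := by
  induction s with
  | zero => exact h
  | succ s ih => exact ih φ.ex (presEmb_ex f φ h)

theorem transfer {A B : Type} [Language.graph.Structure A] [Language.graph.Structure B]
    (H : ∀ b₁ b₂ : B, ∃ (f : A ↪[Language.graph] B) (a₁ a₂ : A), f a₁ = b₁ ∧ f a₂ = b₂)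
    (s : ℕ) (ψ : Language.graph.BoundedFormula Empty (2 + s)) (hψ : ψ.IsQF)
    (hA : A ⊨ (ψ.exsN.alls : Language.graph.Sentence)) :
    B ⊨ (ψ.exsN.alls : Language.graph.Sentence) := by
  rw [Sentence.Realize, BoundedFormula.realize_alls] at hA ⊢
  intro xs
  obtain ⟨f, a₁, a₂, h₁, h₂⟩ := H (xs 0) (xs 1)
  have hp : PresEmb f ψ := fun v xs h => (hψ.realize_embedding f).2 h
  have := presEmb_exsN (n := 2) f ψ hp _ _ (hA ![a₁, a₂])
  convert this using 1
  funext i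
  fin_cases i
  · exact h₁.symm
  · exact h₂.symm

def mkEmb {V W : Type} (E : V → V → Prop) (F : W → W → Prop) (f : V → W)
    (hf : Function.Injective f) (h : ∀ x y, F (f x) (f y) ↔ E x y) :
    @Language.Embedding Language.graph V W (dirGraphStructure E) (dirGraphStructure F) :=
  letI := dirGraphStructure E
  letI := dirGraphStructure F
  { toFun := f
    inj' := hf
    map_fun' := fun g => by cases g
    map_rel' := fun r x => by
      cases r
      exact h _ _ }

/-- embedding of `N` in `M` sending the first copy of the edge to `c → c+1` -/
def fNM (c : Fin 3) : NVert → MVert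
  | Sum.inl (0, a) => Sum.inr (if a = 0 then c else c + 1)
  | Sum.inl (n + 1, a) => Sum.inl (Sum.inl (n, a))
  | Sum.inr p => Sum.inl (Sum.inr p)

theorem fNM_inj (c : Fin 3) : Function.Injective (fNM c) := by
  rintro (⟨_ | n, a⟩ | p) (⟨_ | m, b⟩ | q) h <;> simp [fNM] at h ⊢
  · revert a b c; decide
  · exact h
  · exact h

theorem fNM_rel (c : Fin 3) (x y : NVert) : EM (fNM c x) (fNM c y) ↔ EN x y := by
  rcases x with ⟨_ | n, a⟩ | p <;> rcases y with ⟨_ | m, b⟩ | q <;> simp [fNM, EM, EN]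
  simp only [E3, E2]
  revert a b c; decide

def sh (k n : ℕ) : ℕ := if n < k then n else n + 1

theorem sh_inj (k n m : ℕ) : sh k n = sh k m ↔ n = m := by
  unfold sh; split_ifs <;> omega

theorem sh_ne (k n : ℕ) : sh k n ≠ k := by
  unfold sh; split_ifs <;> omega

def fMN (k : ℕ) : MVert → NVert
  | Sum.inl (Sum.inl p) => Sum.inl p
  | Sum.inl (Sum.inr (n, a)) => Sum.inr (sh k n, a)
  | Sum.inr a => Sum.inr (k, a.castSucc)

theorem fMN_inj (k : ℕ) : Function.Injective (fMN k) := by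
  rintro ((p | ⟨n, a⟩) | a) ((q | ⟨m, b⟩) | b) h <;>
    simp [fMN, sh_inj, sh_ne, (sh_ne _ _).symm] at h ⊢ <;> exact h

theorem fMN_rel (k : ℕ) (x y : MVert) : EN (fMN k x) (fMN k y) ↔ EM x y := by
  rcases x with (p | ⟨n, a⟩) | a <;> rcases y with (q | ⟨m, b⟩) | b <;>
    simp [fMN, EM, EN, sh_inj, sh_ne, (sh_ne _ _).symm]
  simp only [E3, E4]
  revert a b; decide

theorem covNM (b₁ b₂ : MVert) : ∃ c a₁ a₂, fNM c a₁ = b₁ ∧ fNM c a₂ = b₂ := by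
  have hN : ∀ c (x : NVert), ∃ a, fNM c a = Sum.inl x := by
    rintro c (⟨n, a⟩ | p)
    · exact ⟨Sum.inl (n + 1, a), rfl⟩
    · exact ⟨Sum.inr p, rfl⟩
  have h0 : ∀ c : Fin 3, fNM c (Sum.inl (0, 0)) = Sum.inr c := fun c => rfl
  have h1 : ∀ c : Fin 3, fNM c (Sum.inl (0, 1)) = Sum.inr (c + 1) := fun c => rfl
  rcases b₁ with x | c <;> rcases b₂ with y | d
  · obtain ⟨a, ha⟩ := hN 0 x
    obtain ⟨b, hb⟩ := hN 0 y
    exact ⟨0, a, b, ha, hb⟩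
  · obtain ⟨a, ha⟩ := hN d x
    exact ⟨d, a, _, ha, h0 d⟩
  · obtain ⟨a, ha⟩ := hN c y
    exact ⟨c, _, a, h0 c, ha⟩
  · have : d = c ∨ d = c + 1 ∨ c = d + 1 := by revert c d; decide
    rcases this with rfl | rfl | rfl
    · exact ⟨d, _, _, h0 d, h0 d⟩
    · exact ⟨c, _, _, h0 c, h1 c⟩
    · exact ⟨d, _, _, h1 d, h0 d⟩

def idx : NVert → ℕ
  | Sum.inl _ => 0
  | Sum.inr (n, _) => n

theorem covMN (b₁ b₂ : NVert) : ∃ k a₁ a₂, fMN k a₁ = b₁ ∧ fMN k a₂ = b₂ := by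
  have h : ∀ k (x : NVert), idx x < k → fMN k (Sum.inl x) = x := by
    rintro k (p | ⟨n, a⟩) hk
    · rfl
    · have : n < k := hk
      simp [fMN, sh, this]
  exact ⟨idx b₁ + idx b₂ + 1, _, _, h _ b₁ (by omega), h _ b₂ (by omega)⟩

/-- (1) `M` and `N` satisfy the same `∀₂∃`-sentences in the language of graphs;
(2) the sentence
`∀x ((∀y ¬xEy) ∨ (∀y ¬yEx) ∨ ∃z₁z₂z₃ (⋀_{i≠j} zᵢ ≠ z_j ∧ ⋀_i (xEzᵢ ∨ zᵢEx)))`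
is true in `N` and false in `M`. -/
theorem stmt19 :
    (∀ (s : ℕ) (ψ : Language.graph.BoundedFormula Empty (2 + s)), ψ.IsQF →
      (MVert ⊨ (ψ.exsN.alls : Language.graph.Sentence) ↔
        NVert ⊨ (ψ.exsN.alls : Language.graph.Sentence))) ∧
    ((∀ x : NVert, (∀ y, ¬ EN x y) ∨ (∀ y, ¬ EN y x) ∨
        ∃ z₁ z₂ z₃ : NVert, z₁ ≠ z₂ ∧ z₁ ≠ z₃ ∧ z₂ ≠ z₃ ∧
          (EN x z₁ ∨ EN z₁ x) ∧ (EN x z₂ ∨ EN z₂ x) ∧ (EN x z₃ ∨ EN z₃ x)) ∧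
      ¬ (∀ x : MVert, (∀ y, ¬ EM x y) ∨ (∀ y, ¬ EM y x) ∨
        ∃ z₁ z₂ z₃ : MVert, z₁ ≠ z₂ ∧ z₁ ≠ z₃ ∧ z₂ ≠ z₃ ∧
          (EM x z₁ ∨ EM z₁ x) ∧ (EM x z₂ ∨ EM z₂ x) ∧ (EM x z₃ ∨ EM z₃ x))) := by
  refine ⟨fun s ψ hψ => ⟨transfer ?_ s ψ hψ, transfer ?_ s ψ hψ⟩, ?_, ?_⟩
  · intro b₁ b₂
    obtain ⟨k, a₁, a₂, h₁, h₂⟩ := covMN b₁ b₂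
    exact ⟨mkEmb EM EN (fMN k) (fMN_inj k) (fMN_rel k), a₁, a₂, h₁, h₂⟩
  · intro b₁ b₂
    obtain ⟨k, a₁, a₂, h₁, h₂⟩ := covNM b₁ b₂
    exact ⟨mkEmb EN EM (fNM k) (fNM_inj k) (fNM_rel k), a₁, a₂, h₁, h₂⟩
  · rintro (⟨n, a⟩ | ⟨n, a⟩)
    · fin_cases a
      · right; left
        rintro (⟨m, b⟩ | ⟨m, b⟩) <;> simp [EN, E2]
      · left
        rintro (⟨m, b⟩ | ⟨m, b⟩) <;> simp [EN, E2]
    · fin_cases a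
      · right; right
        refine ⟨Sum.inr (n, 1), Sum.inr (n, 2), Sum.inr (n, 3), ?_⟩
        simp [EN, E4]
      · right; right
        refine ⟨Sum.inr (n, 0), Sum.inr (n, 2), Sum.inr (n, 3), ?_⟩
        simp [EN, E4]
      · right; right
        refine ⟨Sum.inr (n, 0), Sum.inr (n, 1), Sum.inr (n, 3), ?_⟩
        simp [EN, E4]
      · right; left
        rintro (⟨m, b⟩ | ⟨m, b⟩) <;> simp [EN, E4]
  · intro h
    rcases h (Sum.inr 0) with h | h | ⟨z₁, z₂, z₃, h12, h13, h23, h1, h2, h3⟩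
    · exact h (Sum.inr 1) (by simp [EM, E3])
    · exact h (Sum.inr 2) (by simp [EM, E3])
    · have key : ∀ z : MVert, EM (Sum.inr 0) z ∨ EM z (Sum.inr 0) →
          z = Sum.inr 1 ∨ z = Sum.inr 2 := by
        rintro (z | z) hz
        · simp [EM] at hz
        · simpa [EM, E3] using hz
      rcases key _ h1 with rfl | rfl <;> rcases key _ h2 with rfl | rfl <;>
        rcases key _ h3 with rfl | rfl <;>
        first | exact h12 rfl | exact h13 rfl | exact h23 rfl
end
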